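/- Multi-step preservation: If Γ ⊢ S ⇒ Γ', σ ⊨ Γ, and ⟨S, σ⟩ ↝* ⟨S', σ'⟩ (reflexive-transitive closure of the small-step relation), then there exists a context Γ₁ such that Γ₁ ⊢ S' ⇒ Γ' and σ' ⊨ Γ₁. -/

import Mathlib

inductive Ty : Type
  | int
  | bool
deriving DecidableEq

inductive Expr : Type
  | int (n : ℤ)
  | tt
  | ff
  | var (x : String)
  | plus (e₁ e₂ : Expr)
  | isOp (e₁ e₂ : Expr)

inductive Val : Type
  | int (n : ℤ)
  | bool (b : Bool)

/-- A value has a type: integer values have type `Int`, booleans have type `Bool`. -/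
inductive ValHasTy : Val → Ty → Prop
  | int (n : ℤ) : ValHasTy (.int n) .int
  | bool (b : Bool) : ValHasTy (.bool b) .bool

/-- Typing contexts: finite maps from variables to types. -/
def Ctx : Type := String → Option Ty

/-- Stores: partial maps from variables to values. -/
def Store : Type := String → Option Val

/-- Expression typing `Γ ⊢ e : τ`. -/
inductive HasTy : Ctx → Expr → Ty → Prop
  | int (Γ : Ctx) (n : ℤ) : HasTy Γ (.int n) .int
  | tt (Γ : Ctx) : HasTy Γ .tt .bool
  | ff (Γ : Ctx) : HasTy Γ .ff .bool
  | var (Γ : Ctx) (x : String) (τ : Ty) : Γ x = some τ → HasTy Γ (.var x) τ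
  | plus (Γ : Ctx) (e₁ e₂ : Expr) :
      HasTy Γ e₁ .int → HasTy Γ e₂ .int → HasTy Γ (.plus e₁ e₂) .int
  | rel (Γ : Ctx) (e₁ e₂ : Expr) (τ : Ty) :
      HasTy Γ e₁ τ → HasTy Γ e₂ τ → HasTy Γ (.isOp e₁ e₂) .bool

inductive Stmt : Type
  | skip
  | letBe (x : String) (e : Expr)
  | ifThenElse (e : Expr) (s₁ s₂ : Stmt)
  | print (e : Expr)
  | seq (s₁ s₂ : Stmt)

/-- Statement typing `Γ ⊢ S ⇒ Γ'`. -/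
inductive StmtTy : Ctx → Stmt → Ctx → Prop
  | skip (Γ : Ctx) : StmtTy Γ .skip Γ
  | letBe (Γ : Ctx) (x : String) (e : Expr) (τ : Ty) :
      HasTy Γ e τ → StmtTy Γ (.letBe x e) (fun y => if y = x then some τ else Γ y)
  | ifThenElse (Γ : Ctx) (e : Expr) (s₁ s₂ : Stmt) :
      HasTy Γ e .bool → StmtTy Γ s₁ Γ → StmtTy Γ s₂ Γ →
      StmtTy Γ (.ifThenElse e s₁ s₂) Γ
  | print (Γ : Ctx) (e : Expr) (τ : Ty) : HasTy Γ e τ → StmtTy Γ (.print e) Γ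
  | seq (Γ Γ' Γ'' : Ctx) (s₁ s₂ : Stmt) :
      StmtTy Γ s₁ Γ' → StmtTy Γ' s₂ Γ'' → StmtTy Γ (.seq s₁ s₂) Γ''

/-- Big-step expression evaluation `σ ⊢ e ⇓ v`. -/
inductive Eval : Store → Expr → Val → Prop
  | int (σ : Store) (n : ℤ) : Eval σ (.int n) (.int n)
  | tt (σ : Store) : Eval σ .tt (.bool true)
  | ff (σ : Store) : Eval σ .ff (.bool false)
  | var (σ : Store) (x : String) (v : Val) : σ x = some v → Eval σ (.var x) v
  | plus (σ : Store) (e₁ e₂ : Expr) (n₁ n₂ : ℤ) :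
      Eval σ e₁ (.int n₁) → Eval σ e₂ (.int n₂) →
      Eval σ (.plus e₁ e₂) (.int (n₁ + n₂))
  | isInt (σ : Store) (e₁ e₂ : Expr) (n₁ n₂ : ℤ) :
      Eval σ e₁ (.int n₁) → Eval σ e₂ (.int n₂) →
      Eval σ (.isOp e₁ e₂) (.bool (n₁ == n₂))
  | isBool (σ : Store) (e₁ e₂ : Expr) (b₁ b₂ : Bool) :
      Eval σ e₁ (.bool b₁) → Eval σ e₂ (.bool b₂) →
      Eval σ (.isOp e₁ e₂) (.bool (b₁ == b₂))

/-- Small-step statement semantics `⟨S, σ⟩ ↝ ⟨S', σ'⟩`. -/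
inductive Step : Stmt → Store → Stmt → Store → Prop
  | letBe (σ : Store) (x : String) (e : Expr) (v : Val) :
      Eval σ e v → Step (.letBe x e) σ .skip (fun y => if y = x then some v else σ y)
  | ifTrue (σ : Store) (e : Expr) (s₁ s₂ : Stmt) :
      Eval σ e (.bool true) → Step (.ifThenElse e s₁ s₂) σ s₁ σ
  | ifFalse (σ : Store) (e : Expr) (s₁ s₂ : Stmt) :
      Eval σ e (.bool false) → Step (.ifThenElse e s₁ s₂) σ s₂ σ
  | print (σ : Store) (e : Expr) (v : Val) : Eval σ e v → Step (.print e) σ .skip σ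
  | seqSkip (σ : Store) (s₂ : Stmt) : Step (.seq .skip s₂) σ s₂ σ
  | seqStep (σ σ' : Store) (s₁ s₁' s₂ : Stmt) :
      Step s₁ σ s₁' σ' → Step (.seq s₁ s₂) σ (.seq s₁' s₂) σ'

/-- `σ ⊨ Γ`: the store is well-typed for the context. -/
def StoreTy (σ : Store) (Γ : Ctx) : Prop :=
  ∀ x τ, Γ x = some τ → ∃ v, σ x = some v ∧ ValHasTy v τ

/-- The empty typing context. -/
def emptyCtx : Ctx := fun _ => none

/-- One step of the small-step semantics, as a relation on configurations. -/
def StepConf : Stmt × Store → Stmt × Store → Prop :=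
  fun c c' => Step c.1 c.2 c'.1 c'.2

theorem Eval.valHasTy {Γ : Ctx} {σ : Store} {e : Expr} {v : Val} {τ : Ty}
    (hv : Eval σ e v) (he : HasTy Γ e τ) (hσ : StoreTy σ Γ) : ValHasTy v τ := by
  cases he with
  | int | tt | ff | plus | rel => cases hv <;> constructor
  | var x _ hx =>
    cases hv with
    | var _ _ hxv =>
      obtain ⟨w, hxw, hw⟩ := hσ x τ hx
      obtain rfl : v = w := Option.some.inj (hxv.symm.trans hxw)
      exact hw

theorem StoreTy.update {Γ : Ctx} {σ : Store} {v : Val} {τ : Ty}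
    (hσ : StoreTy σ Γ) (hv : ValHasTy v τ) (x : String) :
    StoreTy (fun y => if y = x then some v else σ y)
      (fun y => if y = x then some τ else Γ y) := by
  intro y τ' hy
  by_cases hyx : y = x
  · simp only [if_pos hyx, Option.some.injEq] at hy ⊢
    exact ⟨v, rfl, hy ▸ hv⟩
  · simp only [if_neg hyx] at hy ⊢
    exact hσ y τ' hy

/-- Configuration typing: `⟨S, σ⟩` produces the context `Γ'` if `Γ ⊢ S ⇒ Γ'` for some `Γ` with
`σ ⊨ Γ`. The initial context is existentially quantified because it changes along a reduction;
only the final one is invariant. -/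
def ConfTy (c : Stmt × Store) (Γ' : Ctx) : Prop :=
  ∃ Γ : Ctx, StmtTy Γ c.1 Γ' ∧ StoreTy c.2 Γ

theorem confTy_skip_iff {σ : Store} {Γ' : Ctx} : ConfTy (.skip, σ) Γ' ↔ StoreTy σ Γ' := by
  constructor
  · rintro ⟨_, ⟨⟩, hσ⟩
    exact hσ
  · exact fun hσ => ⟨Γ', .skip Γ', hσ⟩

theorem confTy_seq_iff {s₁ s₂ : Stmt} {σ : Store} {Γ'' : Ctx} :
    ConfTy (.seq s₁ s₂, σ) Γ'' ↔ ∃ Γ' : Ctx, ConfTy (s₁, σ) Γ' ∧ StmtTy Γ' s₂ Γ'' := by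
  constructor
  · rintro ⟨Γ, h, hσ⟩
    cases h with
    | seq _ Γ' _ _ _ h₁ h₂ => exact ⟨Γ', ⟨Γ, h₁, hσ⟩, h₂⟩
  · rintro ⟨Γ', ⟨Γ, h₁, hσ⟩, h₂⟩
    exact ⟨Γ, .seq Γ Γ' Γ'' s₁ s₂ h₁ h₂, hσ⟩

theorem Step.confTy {S S' : Stmt} {σ σ' : Store} {Γ' : Ctx}
    (hstep : Step S σ S' σ') (h : ConfTy (S, σ) Γ') : ConfTy (S', σ') Γ' := by
  induction hstep generalizing Γ' with
  | letBe σ x e v hv =>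
    obtain ⟨Γ, ht, hσ⟩ := h
    cases ht with
    | letBe _ _ _ τ he => exact confTy_skip_iff.2 (hσ.update (hv.valHasTy he hσ) x)
  | ifTrue =>
    obtain ⟨Γ, ht, hσ⟩ := h
    cases ht with
    | ifThenElse _ _ _ _ _ h₁ _ => exact ⟨Γ', h₁, hσ⟩
  | ifFalse =>
    obtain ⟨Γ, ht, hσ⟩ := h
    cases ht with
    | ifThenElse _ _ _ _ _ _ h₂ => exact ⟨Γ', h₂, hσ⟩
  | print =>
    obtain ⟨Γ, ht, hσ⟩ := h
    cases ht
    exact confTy_skip_iff.2 hσ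
  | seqSkip =>
    obtain ⟨Γ, hskip, h₂⟩ := confTy_seq_iff.1 h
    exact ⟨Γ, h₂, confTy_skip_iff.1 hskip⟩
  | seqStep _ _ _ _ _ _ ih =>
    obtain ⟨Γ, h₁, h₂⟩ := confTy_seq_iff.1 h
    exact confTy_seq_iff.2 ⟨Γ, ih h₁, h₂⟩

theorem ConfTy.of_reflTransGen {c c' : Stmt × Store} {Γ' : Ctx}
    (h : ConfTy c Γ') (hsteps : Relation.ReflTransGen StepConf c c') : ConfTy c' Γ' := by
  induction hsteps with
  | refl => exact h
  | tail _ hstep ih => exact Step.confTy hstep ih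

/-- **Multi-step preservation**: typing is preserved along any finite sequence
of small steps, with a store that remains well-typed for some intermediate
context. -/
theorem multi_step_preservation (Γ Γ' : Ctx) (S : Stmt) (σ : Store)
    (S' : Stmt) (σ' : Store) (hty : StmtTy Γ S Γ') (hσ : StoreTy σ Γ)
    (hsteps : Relation.ReflTransGen StepConf (S, σ) (S', σ')) :
    ∃ Γ₁ : Ctx, StmtTy Γ₁ S' Γ' ∧ StoreTy σ' Γ₁ := by
  exact ConfTy.of_reflTransGen ⟨Γ, hty, hσ⟩ hsteps
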